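/- For every n ≥ 2 with n ≠ 3, if G is a finite simple graph such that for every k the number of independent sets of size k in G equals the number of independent sets of size k in the cycle C_{2n}, then G is isomorphic to C_{2n} or G is isomorphic to D_{2n}. -/

import Mathlib

open SimpleGraph Polynomial Finset

/-- The number of independent sets of size `k` in the graph `G`. -/
noncomputable def indepCount {V : Type*} [Fintype V] (G : SimpleGraph V) (k : ℕ) : ℕ :=
  Nat.card {s : Finset V // s.card = k ∧ ∀ u ∈ s, ∀ v ∈ s, ¬ G.Adj u v}

/-- The graph `D_n`: a triangle on the vertices `0, 1, 2` together with the
pendant path `2 - 3 - ⋯ - (n-1)`. -/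
def dGraph (n : ℕ) : SimpleGraph (Fin n) :=
  SimpleGraph.fromRel (fun u v =>
    (u.val = 0 ∧ v.val = 1) ∨ (u.val = 0 ∧ v.val = 2) ∨ (u.val = 1 ∧ v.val = 2) ∨
    (2 ≤ u.val ∧ v.val = u.val + 1))

section Counting

variable {V : Type*} [Fintype V] [DecidableEq V]

lemma indepCount_eq_card_cliqueFinset_compl (G : SimpleGraph V) [DecidableRel G.Adj] (k : ℕ) :
    indepCount G k = #(Gᶜ.cliqueFinset k) := by
  unfold indepCount
  rw [Nat.card_eq_fintype_card, Fintype.card_subtype]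
  congr 1
  ext s
  simp only [mem_filter, mem_univ, true_and, mem_cliqueFinset_iff, isNClique_iff, isClique_iff,
    Set.Pairwise, compl_adj, mem_coe]
  constructor
  · rintro ⟨hs, h⟩
    exact ⟨fun u hu v hv huv => ⟨huv, h u hu v hv⟩, hs⟩
  · rintro ⟨h, hs⟩
    refine ⟨hs, fun u hu v hv huv => ?_⟩
    exact (h hu hv huv.ne).2 huv

lemma sum_degree_eq_two_mul_card_cliqueFinset (H : SimpleGraph V) [DecidableRel H.Adj] :
    ∑ v, H.degree v = 2 * #(H.cliqueFinset 2) := by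
  rw [sum_degrees_eq_twice_card_edges]
  congr 1
  refine Finset.card_bij (fun e _ => e.toFinset) ?_ ?_ ?_
  · intro e he
    induction e with | _ a b => ?_
    rw [mem_edgeFinset, mem_edgeSet] at he
    rw [Sym2.toFinset_mk_eq, mem_cliqueFinset_iff, isNClique_iff]
    exact ⟨by simpa [isClique_iff] using fun _ => he, card_pair he.ne⟩
  · intro e _ f _ hef
    exact Sym2.ext fun x => by simpa using congrArg (x ∈ ·) hef
  · intro s hs
    rw [mem_cliqueFinset_iff, isNClique_iff] at hs
    obtain ⟨a, b, hab, rfl⟩ := card_eq_two.1 hs.2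
    exact ⟨s(a, b), by simpa using hs.1 (by simp) (by simp) hab, Sym2.toFinset_mk_eq⟩

lemma card_adj_triples (H : SimpleGraph V) [DecidableRel H.Adj] :
    #{p : V × V × V | H.Adj p.1 p.2.1 ∧ H.Adj p.2.1 p.2.2 ∧ H.Adj p.1 p.2.2} =
      6 * #(H.cliqueFinset 3) := by
  rw [Finset.card_eq_sum_card_fiberwise (f := fun p => ({p.1, p.2.1, p.2.2} : Finset V))
    (t := H.cliqueFinset 3), Finset.sum_const_nat (m := 6), mul_comm]
  · intro s hs
    obtain ⟨a, b, c, hab, hac, hbc, rfl⟩ := is3Clique_iff.1 (mem_cliqueFinset_iff.1 hs)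
    have : ({p ∈ {p : V × V × V | H.Adj p.1 p.2.1 ∧ H.Adj p.2.1 p.2.2 ∧ H.Adj p.1 p.2.2} |
        ({p.1, p.2.1, p.2.2} : Finset V) = {a, b, c}} : Finset (V × V × V)) =
        {(a, b, c), (a, c, b), (b, a, c), (b, c, a), (c, a, b), (c, b, a)} := by
      ext ⟨x, y, z⟩
      simp only [mem_filter, mem_univ, true_and, mem_insert, mem_singleton, Prod.mk.injEq]
      constructor
      · rintro ⟨⟨h1, h2, h3⟩, h⟩
        have hx : x ∈ ({a, b, c} : Finset V) := h ▸ by simp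
        have hy : y ∈ ({a, b, c} : Finset V) := h ▸ by simp
        have hz : z ∈ ({a, b, c} : Finset V) := h ▸ by simp
        simp only [mem_insert, mem_singleton] at hx hy hz
        have := h1.ne
        have := h2.ne
        have := h3.ne
        grind
      · have := hab.symm
        have := hac.symm
        have := hbc.symm
        rintro (⟨rfl, rfl, rfl⟩ | ⟨rfl, rfl, rfl⟩ | ⟨rfl, rfl, rfl⟩ | ⟨rfl, rfl, rfl⟩ |
          ⟨rfl, rfl, rfl⟩ | ⟨rfl, rfl, rfl⟩) <;> refine ⟨by tauto, ?_⟩ <;> ext <;> simp <;> tauto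
    rw [this]
    have := hab.ne
    have := hac.ne
    have := hbc.ne
    rw [card_insert_of_notMem, card_insert_of_notMem, card_insert_of_notMem,
      card_insert_of_notMem, card_insert_of_notMem, card_singleton] <;>
    simp <;> grind
  · rintro ⟨x, y, z⟩ h
    simp only [coe_filter, Set.mem_ofPred_eq, mem_univ, true_and] at h
    simp only [mem_coe, mem_cliqueFinset_iff, is3Clique_iff]
    exact ⟨x, y, z, h.1, h.2.2, h.2.1, rfl⟩

lemma sum_adj_triples (H : SimpleGraph V) [DecidableRel H.Adj] :
    ∑ a, ∑ b, ∑ c, (if H.Adj a b then 1 else 0) * (if H.Adj b c then 1 else 0) *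
      (if H.Adj a c then 1 else 0) = 6 * (#(H.cliqueFinset 3) : ℤ) := by
  have h := congrArg (Nat.cast : ℕ → ℤ) (card_adj_triples H)
  push_cast at h
  rw [← h, Finset.card_filter, Fintype.sum_prod_type]
  push_cast
  simp_rw [Fintype.sum_prod_type]
  refine sum_congr rfl fun a _ => sum_congr rfl fun b _ => sum_congr rfl fun c _ => ?_
  by_cases h1 : H.Adj a b <;> by_cases h2 : H.Adj b c <;> by_cases h3 : H.Adj a c <;>
    simp [h1, h2, h3]

lemma six_mul_indepCount_three (G : SimpleGraph V) [DecidableRel G.Adj] :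
    6 * (indepCount G 3 : ℤ) = (Fintype.card V : ℤ) ^ 3
      - 3 * Fintype.card V * (Fintype.card V + ∑ v, (G.degree v : ℤ))
      + 3 * ∑ v, ((G.degree v : ℤ) + 1) ^ 2 - Fintype.card V - 3 * ∑ v, (G.degree v : ℤ)
      - 6 * #(G.cliqueFinset 3) := by
  rw [indepCount_eq_card_cliqueFinset_compl, ← sum_adj_triples, ← sum_adj_triples]
  set A : V → V → ℤ := fun a b => if G.Adj a b then 1 else 0 with hA
  set D : V → V → ℤ := fun a b => if a = b then 1 else 0 with hD
  have hc : ∀ a b, (if Gᶜ.Adj a b then 1 else 0) = 1 - (D a b + A a b) := by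
    intro a b
    by_cases h : a = b
    · subst h; simp [hA, hD]
    · by_cases h' : G.Adj a b <;> simp [hA, hD, h, h']
  have hAs : ∀ a b, A a b = A b a := fun a b => by simp [hA, G.adj_comm]
  have hDs : ∀ a b, D a b = D b a := fun a b => by simp [hD, eq_comm]
  have hAd : ∀ a, ∑ b, A a b = G.degree a := fun a => by
    simp [hA, ← card_neighborFinset_eq_degree, neighborFinset_eq_filter]
  have hDd : ∀ a, ∑ b, D a b = 1 := fun a => by simp [hD]
  have hB : ∀ a, ∑ b, (D a b + A a b) = G.degree a + 1 := fun a => by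
    rw [sum_add_distrib, hAd, hDd, add_comm]
  have hBs : ∀ a b, D a b + A a b = D b a + A b a := fun a b => by rw [hAs, hDs]
  simp_rw [hc]
  have expand : ∀ a b c, (1 - (D a b + A a b)) * (1 - (D b c + A b c)) * (1 - (D a c + A a c)) =
      1 - (D a b + A a b) - (D b c + A b c) - (D a c + A a c)
      + (D b a + A b a) * (D b c + A b c) + (D c a + A c a) * (D c b + A c b)
      + (D a b + A a b) * (D a c + A a c)
      - (D a b * D a c + D a b * A a c + D b c * A a b + D a c * A a b + A a b * A b c * A a c) := by
    intro a b c
    have : (D a b + A a b) * (D b c + A b c) * (D a c + A a c) =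
        D a b * D a c + D a b * A a c + D b c * A a b + D a c * A a b + A a b * A b c * A a c := by
      simp only [hA, hD]
      by_cases h1 : a = b <;> by_cases h2 : a = c <;> by_cases h3 : b = c <;>
        subst_vars <;> simp_all [G.adj_comm]
    rw [hBs b a, hBs c a, hBs c b, ← this]
    ring
  have hsq : ∑ a, ∑ b, ∑ c, (D a b + A a b) * (D a c + A a c) =
      ∑ a, ((G.degree a : ℤ) + 1) ^ 2 := by
    refine sum_congr rfl fun a _ => ?_
    rw [← sum_mul_sum, hB, sq]
  have hsq' : ∑ a, ∑ b, ∑ c, (D b a + A b a) * (D b c + A b c) =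
      ∑ a, ((G.degree a : ℤ) + 1) ^ 2 := by
    rw [sum_comm, hsq]
  have hsq'' : ∑ a, ∑ b, ∑ c, (D c a + A c a) * (D c b + A c b) =
      ∑ a, ((G.degree a : ℤ) + 1) ^ 2 := by
    rw [← hsq']
    exact sum_congr rfl fun a _ => sum_comm
  have hlin : ∑ a, ((G.degree a : ℤ) + 1) = Fintype.card V + ∑ v, (G.degree v : ℤ) := by
    rw [sum_add_distrib, add_comm]; simp
  have h1 : ∑ a, ∑ b, ∑ _c : V, (D a b + A a b) =
      Fintype.card V * (Fintype.card V + ∑ v, (G.degree v : ℤ)) := by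
    simp_rw [sum_const, card_univ, ← smul_sum, hB, hlin, nsmul_eq_mul]
  have h2 : ∑ _a : V, ∑ b, ∑ c, (D b c + A b c) =
      Fintype.card V * (Fintype.card V + ∑ v, (G.degree v : ℤ)) := by
    simp_rw [hB, hlin, sum_const, card_univ, nsmul_eq_mul]
  have h3 : ∑ a, ∑ _b : V, ∑ c, (D a c + A a c) =
      Fintype.card V * (Fintype.card V + ∑ v, (G.degree v : ℤ)) := by
    simp_rw [hB, sum_const, card_univ, ← smul_sum, hlin, nsmul_eq_mul]
  have h4 : ∑ a, ∑ b, ∑ c, D a b * D a c = Fintype.card V := by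
    simp_rw [← mul_sum, hDd, mul_one, hDd]; simp
  have h5 : ∑ a, ∑ b, ∑ c, D a b * A a c = ∑ v, (G.degree v : ℤ) := by
    simp_rw [← mul_sum, hAd, ← sum_mul, hDd, one_mul]
  have h6 : ∑ a, ∑ b, ∑ c, D b c * A a b = ∑ v, (G.degree v : ℤ) := by
    simp_rw [← sum_mul, hDd, one_mul, hAd]
  have h7 : ∑ a, ∑ b, ∑ c, D a c * A a b = ∑ v, (G.degree v : ℤ) := by
    simp_rw [← sum_mul, hDd, one_mul, hAd]
  have h0 : ∑ _a : V, ∑ _b : V, ∑ _c : V, (1 : ℤ) = (Fintype.card V : ℤ) ^ 3 := by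
    simp; ring
  calc _ = ∑ a, ∑ b, ∑ c, (1 - (D a b + A a b) - (D b c + A b c) - (D a c + A a c)
      + (D b a + A b a) * (D b c + A b c) + (D c a + A c a) * (D c b + A c b)
      + (D a b + A a b) * (D a c + A a c)
      - (D a b * D a c + D a b * A a c + D b c * A a b + D a c * A a b +
        A a b * A b c * A a c)) := by simp_rw [expand]
    _ = ∑ _a : V, ∑ _b : V, ∑ _c : V, (1 : ℤ) - ∑ a, ∑ b, ∑ _c : V, (D a b + A a b)
      - ∑ _a : V, ∑ b, ∑ c, (D b c + A b c) - ∑ a, ∑ _b : V, ∑ c, (D a c + A a c)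
      + ∑ a, ∑ b, ∑ c, (D b a + A b a) * (D b c + A b c)
      + ∑ a, ∑ b, ∑ c, (D c a + A c a) * (D c b + A c b)
      + ∑ a, ∑ b, ∑ c, (D a b + A a b) * (D a c + A a c)
      - (∑ a, ∑ b, ∑ c, D a b * D a c + ∑ a, ∑ b, ∑ c, D a b * A a c
        + ∑ a, ∑ b, ∑ c, D b c * A a b + ∑ a, ∑ b, ∑ c, D a c * A a b
        + ∑ a, ∑ b, ∑ c, A a b * A b c * A a c) := by
      simp only [← sum_add_distrib, ← sum_sub_distrib]
    _ = _ := by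
      rw [h0, h1, h2, h3, hsq, hsq', hsq'', h4, h5, h6, h7]
      ring

lemma indepCount_one (G : SimpleGraph V) : indepCount G 1 = Fintype.card V := by
  classical
  have h : Gᶜ.cliqueFinset 1 = univ.map ⟨_, singleton_injective⟩ := by
    ext s
    simp [mem_cliqueFinset_iff, isNClique_one, eq_comm]
  rw [indepCount_eq_card_cliqueFinset_compl, h, card_map, card_univ]

lemma two_mul_indepCount_two (G : SimpleGraph V) [DecidableRel G.Adj] :
    2 * (indepCount G 2 : ℤ) = Fintype.card V * (Fintype.card V - 1) - ∑ v, (G.degree v : ℤ) := by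
  rw [indepCount_eq_card_cliqueFinset_compl]
  have h := congrArg (Nat.cast : ℕ → ℤ) (sum_degree_eq_two_mul_card_cliqueFinset Gᶜ)
  push_cast at h
  rw [← h, ← card_univ, ← nsmul_eq_mul, ← sum_const, ← sum_sub_distrib]
  refine sum_congr rfl fun v _ => ?_
  have h1 := G.degree_compl v
  have h2 := G.degree_lt_card_verts v
  rw [card_univ]
  omega

end Counting

section Cycle

lemma cycleGraph_adj_iff_val {m : ℕ} (hm : 3 ≤ m) (i j : Fin m) :
    (cycleGraph m).Adj i j ↔ j.val = i.val + 1 ∨ i.val = j.val + 1 ∨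
      (i.val = 0 ∧ j.val = m - 1) ∨ (j.val = 0 ∧ i.val = m - 1) := by
  rw [cycleGraph_adj', Fin.sub_def, Fin.sub_def]
  obtain ⟨i, hi⟩ := i
  obtain ⟨j, hj⟩ := j
  simp only
  rcases lt_trichotomy i j with h | rfl | h
  · rw [show m - i + j = j - i + m by omega, Nat.add_mod_right,
      Nat.mod_eq_of_lt (show m - j + i < m by omega), Nat.mod_eq_of_lt (show j - i < m by omega)]
    omega
  · rw [show m - i + i = m by omega, Nat.mod_self]
    omega
  · rw [show m - j + i = i - j + m by omega, Nat.add_mod_right,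
      Nat.mod_eq_of_lt (show m - i + j < m by omega), Nat.mod_eq_of_lt (show i - j < m by omega)]
    omega

variable {n : ℕ}

lemma cycleGraph_degree_eq_two {m : ℕ} (hm : 3 ≤ m) (i : Fin m) : (cycleGraph m).degree i = 2 := by
  obtain ⟨k, rfl⟩ := Nat.exists_eq_add_of_le' hm
  exact cycleGraph_degree_three_le

lemma cliqueFinset_three_evenCycle (hn : 2 ≤ n) : (cycleGraph (2 * n)).cliqueFinset 3 = ∅ := by
  refine eq_empty_of_forall_notMem fun s hs => ?_
  obtain ⟨a, b, c, hab, hac, hbc, -⟩ := is3Clique_iff.1 (mem_cliqueFinset_iff.1 hs)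
  rw [cycleGraph_adj_iff_val (by omega)] at hab hac hbc
  omega

lemma map_succ_disjoint {m : ℕ} [NeZero m] (hm : 3 ≤ m) {s : Finset (Fin m)}
    (hs : ∀ u ∈ s, ∀ v ∈ s, ¬ (cycleGraph m).Adj u v) :
    Disjoint s (s.map (Equiv.addRight (1 : Fin m)).toEmbedding) := by
  rw [Finset.disjoint_left]
  intro a ha ha'
  obtain ⟨b, hb, rfl⟩ := mem_map.1 ha'
  refine hs b hb _ ha (cycleGraph_adj'.2 (Or.inr ?_))
  have : ((1 : Fin m) : ℕ) = 1 := by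
    rw [Fin.val_one', Nat.mod_eq_of_lt (by omega)]
  simpa using this

lemma card_le_of_indep_evenCycle (hn : 2 ≤ n) {s : Finset (Fin (2 * n))}
    (hs : ∀ u ∈ s, ∀ v ∈ s, ¬ (cycleGraph (2 * n)).Adj u v) : #s ≤ n := by
  have : NeZero (2 * n) := ⟨by omega⟩
  have h := card_le_univ (s.disjUnion _ (map_succ_disjoint (by omega) hs))
  rw [card_disjUnion, card_map, Fintype.card_fin] at h
  omega

lemma mem_iff_succ_notMem_of_indep_evenCycle [NeZero (2 * n)] (hn : 2 ≤ n)
    {s : Finset (Fin (2 * n))} (hs : ∀ u ∈ s, ∀ v ∈ s, ¬ (cycleGraph (2 * n)).Adj u v)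
    (hc : #s = n) (i : Fin (2 * n)) : i + 1 ∈ s ↔ i ∉ s := by
  have hd := map_succ_disjoint (by omega) hs
  have h : s.disjUnion _ hd = univ := by
    rw [← card_eq_iff_eq_univ, card_disjUnion, card_map, Fintype.card_fin]
    omega
  have h1 : i + 1 ∈ s.map (Equiv.addRight (1 : Fin (2 * n))).toEmbedding ↔ i ∈ s := by simp
  rw [← h1]
  have h2 : i + 1 ∈ s.disjUnion _ hd := h ▸ mem_univ _
  rw [mem_disjUnion] at h2
  have : i + 1 ∈ s → i + 1 ∉ s.map _ := fun hi => Finset.disjoint_left.1 hd hi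
  tauto

lemma indepCount_evenCycle_le_two (hn : 2 ≤ n) : indepCount (cycleGraph (2 * n)) n ≤ 2 := by
  have : NeZero (2 * n) := ⟨by omega⟩
  have hinj : Function.Injective
      (fun s : {s : Finset (Fin (2 * n)) // #s = n ∧
        ∀ u ∈ s, ∀ v ∈ s, ¬ (cycleGraph (2 * n)).Adj u v} => decide (0 ∈ s.1)) := by
    rintro ⟨s, hs, hs'⟩ ⟨t, ht, ht'⟩ h
    rw [decide_eq_decide] at h
    have key : ∀ k (hk : k < 2 * n), ⟨k, hk⟩ ∈ s ↔ ⟨k, hk⟩ ∈ t := by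
      intro k
      induction k with
      | zero => exact fun _ => h
      | succ k ih =>
        intro hk
        have hk' : (⟨k + 1, hk⟩ : Fin (2 * n)) = ⟨k, by omega⟩ + 1 :=
          Fin.ext (by simp [Fin.val_add, Nat.mod_eq_of_lt hk])
        rw [hk', mem_iff_succ_notMem_of_indep_evenCycle hn hs' hs,
          mem_iff_succ_notMem_of_indep_evenCycle hn ht' ht, ih]
    exact Subtype.ext (Finset.ext fun i => key i.val i.isLt)
  simpa [indepCount] using Nat.card_le_card_of_injective _ hinj

lemma indepCount_evenCycle_pos (hn : 2 ≤ n) : 0 < indepCount (cycleGraph (2 * n)) n := by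
  let f : Fin n → Fin (2 * n) := fun i => ⟨2 * i.val, by omega⟩
  have hf : Function.Injective f := fun i j hij => by
    have := congrArg Fin.val hij
    simp only [f] at this
    omega
  have hs : #(univ.image f) = n ∧
      ∀ u ∈ univ.image f, ∀ v ∈ univ.image f, ¬ (cycleGraph (2 * n)).Adj u v := by
    refine ⟨by rw [card_image_of_injective _ hf, card_univ, Fintype.card_fin], ?_⟩
    simp only [mem_image, mem_univ, true_and, forall_exists_index, forall_apply_eq_imp_iff, f]
    intro i j
    rw [cycleGraph_adj_iff_val (by omega)]
    simp only
    omega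
  have : Nonempty {s : Finset (Fin (2 * n)) // #s = n ∧
        ∀ u ∈ s, ∀ v ∈ s, ¬ (cycleGraph (2 * n)).Adj u v} := ⟨⟨_, hs⟩⟩
  exact Nat.card_pos

end Cycle

section Data

variable {V : Type*} [Fintype V] {G : SimpleGraph V} {n : ℕ}

lemma exists_indep_card_eq (hn : 2 ≤ n)
    (h : ∀ k, indepCount G k = indepCount (cycleGraph (2 * n)) k) :
    ∃ S : Finset V, #S = n ∧ ∀ u ∈ S, ∀ v ∈ S, ¬ G.Adj u v := by
  have hpos := indepCount_evenCycle_pos hn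
  rw [← h, indepCount] at hpos
  obtain ⟨⟨S, hS⟩⟩ := (Nat.card_pos_iff.1 hpos).1
  exact ⟨S, hS⟩

lemma card_le_of_indep (hn : 2 ≤ n)
    (h : ∀ k, indepCount G k = indepCount (cycleGraph (2 * n)) k)
    (S : Finset V) (hS : ∀ u ∈ S, ∀ v ∈ S, ¬ G.Adj u v) : #S ≤ n := by
  have hpos : 0 < indepCount G #S :=
    have : Nonempty {s : Finset V // #s = #S ∧ ∀ u ∈ s, ∀ v ∈ s, ¬ G.Adj u v} := ⟨⟨S, rfl, hS⟩⟩
    Nat.card_pos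
  rw [h, indepCount] at hpos
  obtain ⟨⟨T, hT, hT'⟩⟩ := (Nat.card_pos_iff.1 hpos).1
  exact hT ▸ card_le_of_indep_evenCycle hn hT'

lemma eq_of_three_max_indep (hn : 2 ≤ n)
    (h : ∀ k, indepCount G k = indepCount (cycleGraph (2 * n)) k) (S T U : Finset V)
    (hS : #S = n ∧ ∀ u ∈ S, ∀ v ∈ S, ¬ G.Adj u v) (hT : #T = n ∧ ∀ u ∈ T, ∀ v ∈ T, ¬ G.Adj u v)
    (hU : #U = n ∧ ∀ u ∈ U, ∀ v ∈ U, ¬ G.Adj u v) (hST : S ≠ T) (hSU : S ≠ U) : T = U := by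
  classical
  by_contra hTU
  have hle := indepCount_evenCycle_le_two hn
  rw [← h, indepCount, Nat.card_eq_fintype_card] at hle
  refine hle.not_gt (Fintype.two_lt_card_iff.2 ⟨⟨S, hS⟩, ⟨T, hT⟩, ⟨U, hU⟩, ?_⟩)
  simp [hST, hSU, hTU]

lemma card_eq_of_indepEquiv (h : ∀ k, indepCount G k = indepCount (cycleGraph (2 * n)) k) :
    Fintype.card V = 2 * n := by
  classical
  rw [← indepCount_one G, h, indepCount_one, Fintype.card_fin]

variable [DecidableEq V] [DecidableRel G.Adj]

lemma sum_degree_of_indepEquiv (hn : 2 ≤ n)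
    (h : ∀ k, indepCount G k = indepCount (cycleGraph (2 * n)) k) :
    ∑ v, (G.degree v : ℤ) = 4 * n := by
  have h1 := two_mul_indepCount_two G
  rw [h, two_mul_indepCount_two, card_eq_of_indepEquiv h, Fintype.card_fin] at h1
  simp only [cycleGraph_degree_eq_two (show 3 ≤ 2 * n by omega), sum_const, card_univ,
    Fintype.card_fin, nsmul_eq_mul] at h1
  push_cast at h1
  linarith

lemma sum_degree_mul_of_indepEquiv (hn : 2 ≤ n)
    (h : ∀ k, indepCount G k = indepCount (cycleGraph (2 * n)) k) :
    ∑ v, ((G.degree v : ℤ) - 1) * (G.degree v - 2) = 2 * #(G.cliqueFinset 3) := by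
  have h1 := six_mul_indepCount_three G
  rw [h, six_mul_indepCount_three, card_eq_of_indepEquiv h, Fintype.card_fin,
    cliqueFinset_three_evenCycle hn, sum_degree_of_indepEquiv hn h] at h1
  simp only [cycleGraph_degree_eq_two (show 3 ≤ 2 * n by omega), sum_const, card_univ,
    Fintype.card_fin, nsmul_eq_mul, card_empty] at h1
  have h2 : ∑ v, ((G.degree v : ℤ) - 1) * (G.degree v - 2) =
      ∑ v, ((G.degree v : ℤ) + 1) ^ 2 - 5 * ∑ v, (G.degree v : ℤ) + 2 * n := by
    rw [show (2 * n : ℤ) = ∑ _v : V, 1 by simp [card_eq_of_indepEquiv h], mul_sum,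
      ← sum_sub_distrib, ← sum_add_distrib]
    exact sum_congr rfl fun v _ => by ring
  rw [h2, sum_degree_of_indepEquiv hn h]
  push_cast at h1
  linarith

end Data

section Recognition

variable {V : Type*} [Fintype V] [DecidableEq V] {H : SimpleGraph V} [DecidableRel H.Adj]

/-- A connected 2-regular graph is a cycle, and any edge may be placed at the beginning. -/
lemma exists_iso_cycleGraph (hconn : H.Connected) (hreg : ∀ v, H.degree v = 2) {b a : V}
    (hba : H.Adj b a) {m : ℕ} (hm : Fintype.card V = m) :
    ∃ f : cycleGraph m ≃g H, ∃ hm : 3 ≤ m, f ⟨0, by omega⟩ = b ∧ f ⟨1, by omega⟩ = a := by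
  have hcyc : H.IsCycles := fun v _ => by
    rw [← hreg v, ← card_neighborFinset_eq_degree, ← Set.ncard_coe_finset, coe_neighborFinset]
  obtain ⟨q, hq, hqv⟩ := hcyc.exists_cycle_toSubgraph_verts_eq_connectedComponentSupp
    (c := H.connectedComponentMk b) (v := b) rfl ⟨a, hba⟩
  obtain ⟨p, hp, hpa, hpv⟩ := hq.exists_isCycle_snd_verts_eq (w := a) (by
    rwa [hq.adj_toSubgraph_iff_of_isCycles hcyc (by simp)])
  have hsupp : ∀ v, v ∈ p.support := fun v => by
    rw [← Walk.mem_verts_toSubgraph, hpv, hqv, ConnectedComponent.mem_supp_iff,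
      ConnectedComponent.eq]
    exact hconn.preconnected v b
  have h3 := hp.three_le_length
  let g : Fin p.length → V := fun i => p.getVert i
  have hg : Function.Bijective g := by
    constructor
    · intro i j hij
      exact Fin.ext (hp.getVert_injOn' (by simp only [Set.mem_ofPred_eq]; omega)
        (by simp only [Set.mem_ofPred_eq]; omega) hij)
    · intro v
      obtain ⟨k, hk, hkl⟩ := Walk.mem_support_iff_exists_getVert.1 (hsupp v)
      rcases hkl.lt_or_eq with hlt | rfl
      · exact ⟨⟨k, hlt⟩, hk⟩
      · exact ⟨⟨0, by omega⟩, by simpa [g] using hk⟩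
  have hlen : p.length = m := by
    rw [← hm, ← Fintype.card_of_bijective hg, Fintype.card_fin]
  subst hlen
  have hsucc : ∀ i j : Fin p.length, j.val = i.val + 1 → H.Adj (g i) (g j) := fun i j hij => by
    simpa only [g, hij] using p.adj_getVert_succ i.isLt
  have hlast : ∀ i j : Fin p.length, i.val = 0 → j.val = p.length - 1 → H.Adj (g j) (g i) := by
    intro i j hi hj
    have := p.adj_getVert_succ (i := p.length - 1) (by omega)
    rw [show p.length - 1 + 1 = p.length by omega, Walk.getVert_length] at this
    simpa only [g, hi, hj, Walk.getVert_zero] using this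
  have hhom : ∀ i j, (cycleGraph p.length).Adj i j → H.Adj (g i) (g j) := by
    intro i j hij
    rw [cycleGraph_adj_iff_val h3] at hij
    rcases hij with h | h | ⟨h, h'⟩ | ⟨h, h'⟩
    · exact hsucc i j h
    · exact (hsucc j i h).symm
    · exact (hlast i j h h').symm
    · exact hlast j i h h'
  have hnbr : ∀ i, ((cycleGraph p.length).neighborFinset i).image g = H.neighborFinset (g i) := by
    intro i
    refine eq_of_subset_of_card_le ?_ ?_
    · intro v hv
      obtain ⟨j, hj, rfl⟩ := mem_image.1 hv
      exact (mem_neighborFinset ..).2 (hhom i j ((mem_neighborFinset ..).1 hj))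
    · rw [card_image_of_injective _ hg.1, card_neighborFinset_eq_degree,
        card_neighborFinset_eq_degree, hreg, cycleGraph_degree_eq_two h3]
  refine ⟨⟨Equiv.ofBijective g hg, ?_⟩, h3, p.getVert_zero, hpa⟩
  intro i j
  refine ⟨fun hij => ?_, hhom i j⟩
  have : g j ∈ H.neighborFinset (g i) := (mem_neighborFinset ..).2 hij
  rw [← hnbr, mem_image] at this
  obtain ⟨k, hk, hkj⟩ := this
  rw [← hg.1 hkj]
  exact (mem_neighborFinset ..).1 hk

lemma card_inter_eq_card_sdiff_of_regular {d : ℕ} (hd : d ≠ 0) (hreg : ∀ v, H.degree v = d)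
    {S K : Finset V}
    (hS : ∀ u ∈ S, ∀ v ∈ S, ¬ H.Adj u v) (hS' : ∀ u ∉ S, ∀ v ∉ S, ¬ H.Adj u v)
    (hK : ∀ u v, H.Adj u v → (u ∈ K ↔ v ∈ K)) : #(K ∩ S) = #(K \ S) := by
  have h := Finset.card_mul_eq_card_mul (s := K ∩ S) (t := K \ S) (m := d) (n := d) H.Adj ?_ ?_
  · exact Nat.eq_of_mul_eq_mul_right (by omega) h
  · intro u hu
    rw [← hreg u, ← card_neighborFinset_eq_degree]
    congr 1
    ext v
    rw [mem_inter] at hu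
    simp only [mem_bipartiteAbove, mem_sdiff, mem_neighborFinset, and_iff_right_iff_imp]
    exact fun huv => ⟨(hK u v huv).1 hu.1, fun hv => hS u hu.2 v hv huv⟩
  · intro u hu
    rw [← hreg u, ← card_neighborFinset_eq_degree]
    congr 1
    ext v
    rw [mem_sdiff] at hu
    simp only [mem_bipartiteBelow, mem_inter, mem_neighborFinset, H.adj_comm v u,
      and_iff_right_iff_imp]
    exact fun huv => ⟨(hK u v huv).1 hu.1, not_not.1 fun hv => hS' u hu.2 v hv huv⟩

/-- A regular bipartite graph in which one side `S` cannot be exchanged away from `x` for another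
independent set of the same size is connected. -/
lemma connected_of_forall_indep_eq {d : ℕ} (hd : d ≠ 0) (hreg : ∀ v, H.degree v = d)
    {S : Finset V} (hS : ∀ u ∈ S, ∀ v ∈ S, ¬ H.Adj u v) (hS' : ∀ u ∉ S, ∀ v ∉ S, ¬ H.Adj u v)
    (x : V)
    (hx : ∀ U : Finset V, #U = #S → (∀ u ∈ U, ∀ v ∈ U, ¬ H.Adj u v) → (x ∈ U ↔ x ∈ S) → U = S) :
    H.Connected := by
  classical
  let K : Finset V := {v | ¬ H.Reachable x v}
  have hKmem : ∀ v, v ∈ K ↔ ¬ H.Reachable x v := by simp [K]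
  have hK : ∀ u v, H.Adj u v → (u ∈ K ↔ v ∈ K) := fun u v huv => by
    rw [hKmem, hKmem, not_iff_not]
    exact ⟨fun h => h.trans huv.reachable, fun h => h.trans huv.symm.reachable⟩
  have hUS : S \ K ∪ K \ S = S := by
    refine hx _ ?_ ?_ ?_
    · rw [card_union_of_disjoint (by
        rw [Finset.disjoint_left]; simp only [mem_sdiff]; tauto),
        ← card_inter_eq_card_sdiff_of_regular hd hreg hS hS' hK, inter_comm,
        card_sdiff_add_card_inter]
    · intro u hu v hv huv
      have h1 := hS u
      have h2 := hS' u
      have h3 := hK u v huv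
      simp only [mem_union, mem_sdiff] at hu hv
      grind
    · have : x ∉ K := by simp [hKmem]
      simp [this]
  have hreach : ∀ v, H.Reachable x v := fun v => by
    by_contra hv
    rw [← hKmem] at hv
    have : v ∈ S \ K ∪ K \ S ↔ v ∈ S := by rw [hUS]
    simp [hv] at this
  have : Nonempty V := ⟨x⟩
  exact ⟨fun u v => (hreach u).symm.trans (hreach v)⟩

end Recognition

section Structure

variable {V : Type*} [Fintype V] [DecidableEq V] {G : SimpleGraph V} [DecidableRel G.Adj]
  {n : ℕ} {S : Finset V}

/-- Exchanging a vertex outside an independent set with its only neighbour inside. -/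
lemma indep_insert_erase (hS : ∀ u ∈ S, ∀ v ∈ S, ¬ G.Adj u v) {r s : V}
    (hrs : G.neighborFinset r ∩ S = {s}) :
    ∀ u ∈ insert r (S.erase s), ∀ v ∈ insert r (S.erase s), ¬ G.Adj u v := by
  have key : ∀ v ∈ S.erase s, ¬ G.Adj r v := fun v hv hrv => by
    rw [mem_erase] at hv
    have : v ∈ G.neighborFinset r ∩ S := mem_inter.2 ⟨(mem_neighborFinset ..).2 hrv, hv.2⟩
    rw [hrs, mem_singleton] at this
    exact hv.1 this
  intro u hu v hv huv
  rw [mem_insert] at hu hv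
  rcases hu with rfl | hu <;> rcases hv with rfl | hv
  · exact huv.ne rfl
  · exact key v hv huv
  · exact key u hu huv.symm
  · exact hS u (mem_of_mem_erase hu) v (mem_of_mem_erase hv) huv

lemma card_insert_erase_of_neighborFinset_inter {r s : V} (hr : r ∉ S)
    (hrs : G.neighborFinset r ∩ S = {s}) : #(insert r (S.erase s)) = #S := by
  have hs : s ∈ S := (mem_inter.1 (hrs ▸ mem_singleton_self s)).2
  rw [card_insert_of_notMem (fun h => hr (mem_of_mem_erase h)), card_erase_add_one hs]

lemma degree_eq_of_mem (hS : ∀ u ∈ S, ∀ v ∈ S, ¬ G.Adj u v) {s : V} (hs : s ∈ S) :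
    G.degree s = #(Sᶜ.bipartiteAbove G.Adj s) := by
  rw [← card_neighborFinset_eq_degree]
  congr 1
  ext v
  simp only [mem_neighborFinset, mem_bipartiteAbove, mem_compl]
  exact ⟨fun h => ⟨fun hv => hS s hs v hv h, h⟩, And.right⟩

lemma sum_degree_of_indep (hS : ∀ u ∈ S, ∀ v ∈ S, ¬ G.Adj u v) :
    ∑ v, G.degree v = 2 * ∑ r ∈ Sᶜ, #(G.neighborFinset r ∩ S)
      + ∑ r ∈ Sᶜ, #(G.neighborFinset r \ S) := by
  have h1 : ∑ s ∈ S, G.degree s = ∑ r ∈ Sᶜ, #(G.neighborFinset r ∩ S) := by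
    rw [sum_congr rfl fun s hs => degree_eq_of_mem hS hs,
      sum_card_bipartiteAbove_eq_sum_card_bipartiteBelow]
    refine sum_congr rfl fun r _ => congrArg _ ?_
    ext v
    simp [mem_bipartiteBelow, G.adj_comm, and_comm]
  have h2 : ∑ r ∈ Sᶜ, G.degree r =
      ∑ r ∈ Sᶜ, #(G.neighborFinset r ∩ S) + ∑ r ∈ Sᶜ, #(G.neighborFinset r \ S) := by
    rw [← sum_add_distrib]
    refine sum_congr rfl fun r _ => ?_
    rw [card_inter_add_card_sdiff, card_neighborFinset_eq_degree]
  rw [← sum_add_sum_compl S, h1, h2]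
  ring

/-- If a graph with `2 * n` vertices and `2 * n` edges has independence number `n` and at most two
maximum independent sets, then the complement of a maximum independent set spans at most one edge. -/
lemma compl_indep_or_exists_unique_edge (hcard : Fintype.card V = 2 * n)
    (hdeg : ∑ v, G.degree v = 4 * n) (hSn : #S = n) (hS : ∀ u ∈ S, ∀ v ∈ S, ¬ G.Adj u v)
    (hmax : ∀ T : Finset V, (∀ u ∈ T, ∀ v ∈ T, ¬ G.Adj u v) → #T ≤ n)
    (htwo : ∀ T U : Finset V, #T = n → #U = n → (∀ u ∈ T, ∀ v ∈ T, ¬ G.Adj u v) →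
      (∀ u ∈ U, ∀ v ∈ U, ¬ G.Adj u v) → S ≠ T → S ≠ U → T = U) :
    (∀ u ∉ S, ∀ v ∉ S, ¬ G.Adj u v) ∨
    ∃ x y r₀, x ∉ S ∧ y ∉ S ∧ G.Adj x y ∧ (∀ u ∉ S, ∀ v ∉ S, G.Adj u v → s(u, v) = s(x, y)) ∧
      r₀ ∉ S ∧ #(G.neighborFinset r₀ ∩ S) = 1 ∧
      ∀ r ∉ S, r ≠ r₀ → #(G.neighborFinset r ∩ S) = 2 := by
  have hScn : #Sᶜ = n := by rw [card_compl]; omega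
  have hpos : ∀ r ∉ S, 1 ≤ #(G.neighborFinset r ∩ S) := by
    intro r hr
    rw [Nat.one_le_iff_ne_zero, Ne, card_eq_zero]
    intro h0
    have hno : ∀ v ∈ S, ¬ G.Adj r v := fun v hv hrv => by
      have : v ∈ G.neighborFinset r ∩ S := mem_inter.2 ⟨(mem_neighborFinset ..).2 hrv, hv⟩
      simp [h0] at this
    have := hmax (insert r S) (by
      intro u hu v hv huv
      rw [mem_insert] at hu hv
      rcases hu with rfl | hu <;> rcases hv with rfl | hv
      · exact huv.ne rfl
      · exact hno v hv huv
      · exact hno u hu huv.symm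
      · exact hS u hu v hv huv)
    rw [card_insert_of_notMem hr] at this
    omega
  have huniq : ∀ r ∉ S, ∀ r' ∉ S, #(G.neighborFinset r ∩ S) = 1 →
      #(G.neighborFinset r' ∩ S) = 1 → r = r' := by
    intro r hr r' hr' h h'
    obtain ⟨s, hs⟩ := card_eq_one.1 h
    obtain ⟨s', hs'⟩ := card_eq_one.1 h'
    have heq := htwo _ _ ((card_insert_erase_of_neighborFinset_inter hr hs).trans hSn)
      ((card_insert_erase_of_neighborFinset_inter hr' hs').trans hSn)
      (indep_insert_erase hS hs) (indep_insert_erase hS hs')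
      (fun h => hr (h ▸ mem_insert_self _ _)) (fun h => hr' (h ▸ mem_insert_self _ _))
    have : r ∈ insert r' (S.erase s') := heq ▸ mem_insert_self _ _
    exact (mem_insert.1 this).resolve_right fun h => hr (mem_of_mem_erase h)
  rw [sum_degree_of_indep hS] at hdeg
  by_cases hR : ∀ u ∉ S, ∀ v ∉ S, ¬ G.Adj u v
  · exact Or.inl hR
  right
  push Not at hR
  obtain ⟨x, hx, y, hy, hxy⟩ := hR
  have hout : ∀ u ∉ S, ∀ v ∉ S, G.Adj u v → 1 ≤ #(G.neighborFinset u \ S) := fun u _ v hv huv =>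
    card_pos.2 ⟨v, mem_sdiff.2 ⟨(mem_neighborFinset ..).2 huv, hv⟩⟩
  have hpair : ∀ f : V → ℕ, f x + f y + ∑ r ∈ Sᶜ \ {x, y}, f r = ∑ r ∈ Sᶜ, f r := fun f => by
    rw [← sum_pair hxy.ne, add_comm]
    exact sum_sdiff (by simp [insert_subset_iff, hx, hy])
  have hρ := hpair fun r => #(G.neighborFinset r \ S)
  have hρx := hout x hx y hy hxy
  have hρy := hout y hy x hx hxy.symm
  obtain ⟨r₀, hr₀, hr₀1⟩ : ∃ r₀ ∉ S, #(G.neighborFinset r₀ ∩ S) = 1 := by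
    by_contra! hne
    have : ∑ _r ∈ Sᶜ, 2 ≤ ∑ r ∈ Sᶜ, #(G.neighborFinset r ∩ S) := sum_le_sum fun r hr => by
      rw [mem_compl] at hr
      have := hpos r hr
      have := hne r hr
      omega
    rw [sum_const, hScn, smul_eq_mul] at this
    omega
  have htwo_le : ∀ r ∈ Sᶜ.erase r₀, 2 ≤ #(G.neighborFinset r ∩ S) := fun r hr => by
    rw [mem_erase, mem_compl] at hr
    have := hpos r hr.2
    have : #(G.neighborFinset r ∩ S) ≠ 1 := fun h => hr.1 (huniq r hr.2 r₀ hr₀ h hr₀1)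
    omega
  have hσ := add_sum_erase Sᶜ (fun r => #(G.neighborFinset r ∩ S)) (mem_compl.2 hr₀)
  simp only [hr₀1] at hσ
  have hle := sum_le_sum htwo_le
  have hn : #(Sᶜ.erase r₀) + 1 = n := by rw [card_erase_add_one (mem_compl.2 hr₀), hScn]
  rw [sum_const, smul_eq_mul] at hle
  refine ⟨x, y, r₀, hx, hy, hxy, ?_, hr₀, hr₀1, ?_⟩
  · have hx1 : #(G.neighborFinset x \ S) ≤ 1 := by omega
    have hy1 : #(G.neighborFinset y \ S) ≤ 1 := by omega
    have hrest : ∑ r ∈ Sᶜ \ {x, y}, #(G.neighborFinset r \ S) = 0 := by omega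
    rw [sum_eq_zero_iff] at hrest
    rw [card_le_one] at hx1 hy1
    intro u hu v hv huv
    have hu' : u = x ∨ u = y := by
      by_contra hne
      have := hrest u (by simpa [hu] using hne)
      have := hout u hu v hv huv
      omega
    rcases hu' with rfl | rfl
    · rw [hx1 v (by simp [huv, hv]) y (by simp [hxy, hy])]
    · rw [hy1 v (by simp [huv, hv]) x (by simp [hxy.symm, hx]), Sym2.eq_swap]
  · intro r hr hne
    have heq := (sum_eq_sum_iff_of_le htwo_le).1 (by rw [sum_const, smul_eq_mul]; omega) r
      (mem_erase.2 ⟨hne, mem_compl.2 hr⟩)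
    exact heq.symm

lemma cliqueFinset_three_of_bipartite (hS : ∀ u ∈ S, ∀ v ∈ S, ¬ G.Adj u v)
    (hS' : ∀ u ∉ S, ∀ v ∉ S, ¬ G.Adj u v) : G.cliqueFinset 3 = ∅ := by
  refine eq_empty_of_forall_notMem fun s hs => ?_
  obtain ⟨a, b, c, hab, hac, hbc, -⟩ := is3Clique_iff.1 (mem_cliqueFinset_iff.1 hs)
  by_cases ha : a ∈ S
  · exact hS' b (fun hb => hS a ha b hb hab) c (fun hc => hS a ha c hc hac) hbc
  · exact hS b (not_not.1 fun hb => hS' a ha b hb hab) c (not_not.1 fun hc => hS' a ha c hc hac) hbc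

lemma card_cliqueFinset_three_of_unique_edge (hS : ∀ u ∈ S, ∀ v ∈ S, ¬ G.Adj u v) {x y : V}
    (hxy : G.Adj x y) (hR : ∀ u ∉ S, ∀ v ∉ S, G.Adj u v → s(u, v) = s(x, y)) :
    #(G.cliqueFinset 3) = #(G.neighborFinset x ∩ G.neighborFinset y) := by
  symm
  refine Finset.card_bij (fun s _ => {s, x, y}) ?_ ?_ ?_
  · intro s hs
    simp only [mem_inter, mem_neighborFinset] at hs
    rw [mem_cliqueFinset_iff, is3Clique_triple_iff]
    exact ⟨hs.1.symm, hs.2.symm, hxy⟩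
  · intro s hs t ht hst
    simp only [mem_inter, mem_neighborFinset] at hs ht
    have : s ∈ ({t, x, y} : Finset V) := hst ▸ mem_insert_self _ _
    simp only [mem_insert, mem_singleton] at this
    rcases this with h | rfl | rfl
    · exact h
    · exact absurd rfl hs.1.ne
    · exact absurd rfl hs.2.ne
  · intro t ht
    have hR' : ∀ u ∉ S, ∀ v ∉ S, G.Adj u v → u = x ∧ v = y ∨ u = y ∧ v = x :=
      fun u hu v hv huv => by simpa using hR u hu v hv huv
    obtain ⟨a, b, c, hab, hac, hbc, rfl⟩ := is3Clique_iff.1 (mem_cliqueFinset_iff.1 ht)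
    have key : ∀ a b c, G.Adj a b → G.Adj a c → b = x ∧ c = y ∨ b = y ∧ c = x →
        ∃ s, ∃ _ : s ∈ G.neighborFinset x ∩ G.neighborFinset y, ({s, x, y} : Finset V) = {a, b, c} := by
      rintro a b c hab hac (⟨rfl, rfl⟩ | ⟨rfl, rfl⟩)
      · exact ⟨a, by simp [hab.symm, hac.symm], rfl⟩
      · exact ⟨a, by simp [hab.symm, hac.symm], by rw [pair_comm b c]⟩
    by_cases ha : a ∈ S
    · exact key a b c hab hac (hR' b (fun h => hS a ha b h hab) c (fun h => hS a ha c h hac) hbc)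
    by_cases hb : b ∈ S
    · rw [insert_comm]
      exact key b a c hab.symm hbc (hR' a ha c (fun h => hS b hb c h hbc) hac)
    · rw [show ({a, b, c} : Finset V) = {c, a, b} by ext; simp; tauto]
      exact key c a b hac.symm hbc.symm (hR' a ha b hb hab)

end Structure

section MoveEdge

variable {V : Type*} {G : SimpleGraph V}

/-- The graph obtained by replacing the edge `xy` by the edge `xl`. -/
def moveEdge (G : SimpleGraph V) (x y l : V) (hxl : x ≠ l) : SimpleGraph V where
  Adj u v := (G.Adj u v ∧ s(u, v) ≠ s(x, y)) ∨ s(u, v) = s(x, l)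
  symm := ⟨fun u v h => by rwa [G.adj_comm, Sym2.eq_swap]⟩
  loopless := ⟨fun u h => by
    rcases h with h | h
    · exact h.1.ne rfl
    · simp only [Sym2.eq_iff] at h
      grind⟩

/-- A graph which becomes a cycle when an edge of a triangle is moved is `dGraph m`. -/
lemma nonempty_iso_dGraph {x y l s : V} (hxl : x ≠ l) (hxy : G.Adj x y) (hnxl : ¬ G.Adj x l)
    (hsy : (moveEdge G x y l hxl).Adj s y) (hls : l ≠ s) {m : ℕ} (hm : 4 ≤ m)
    (f : cycleGraph m ≃g moveEdge G x y l hxl) (hf0 : f ⟨0, by omega⟩ = x)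
    (hf1 : f ⟨1, by omega⟩ = s) : Nonempty (G ≃g dGraph m) := by
  have hadj : ∀ u v, G.Adj u v ↔
      ((moveEdge G x y l hxl).Adj u v ∧ s(u, v) ≠ s(x, l)) ∨ s(u, v) = s(x, y) := by
    intro u v
    have h1 : s(u, v) = s(x, l) → ¬ G.Adj u v := fun h h' => by
      rw [← mem_edgeSet, h] at h'
      exact hnxl h'
    have h2 : s(u, v) = s(x, y) → G.Adj u v := fun h => by
      rw [← mem_edgeSet, h]
      exact hxy
    change _ ↔ (((G.Adj u v ∧ s(u, v) ≠ s(x, y)) ∨ s(u, v) = s(x, l)) ∧ _) ∨ _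
    tauto
  have hf2 : f ⟨2, by omega⟩ = y := by
    obtain ⟨j, hj⟩ := f.surjective y
    have hadj1 : (moveEdge G x y l hxl).Adj (f ⟨1, by omega⟩) (f j) := by rwa [hf1, hj]
    rw [f.map_adj_iff, cycleGraph_adj_iff_val (by omega)] at hadj1
    have hj0 : j.val ≠ 0 := fun h =>
      hxy.ne (hf0.symm.trans ((congrArg f (Fin.ext h.symm)).trans hj))
    exact (congrArg f (Fin.ext (by simp only at hadj1 ⊢; omega))).trans hj
  have hfl : f ⟨m - 1, by omega⟩ = l := by
    obtain ⟨j, hj⟩ := f.surjective l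
    have hadj0 : (moveEdge G x y l hxl).Adj (f ⟨0, by omega⟩) (f j) := by
      rw [hf0, hj]
      exact Or.inr rfl
    rw [f.map_adj_iff, cycleGraph_adj_iff_val (by omega)] at hadj0
    have hj1 : j.val ≠ 1 := fun h => hls (hj.symm.trans ((congrArg f (Fin.ext h)).trans hf1))
    exact (congrArg f (Fin.ext (by simp only at hadj0 ⊢; omega))).trans hj
  refine ⟨RelIso.symm ⟨f.toEquiv, ?_⟩⟩
  intro i j
  change G.Adj (f i) (f j) ↔ _
  have hpair : ∀ a b : Fin m, s(f i, f j) = s(f a, f b) ↔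
      (i.val = a ∧ j.val = b) ∨ (i.val = b ∧ j.val = a) := fun a b => by
    simp only [Sym2.eq_iff, f.injective.eq_iff, Fin.ext_iff]
  have hxl_pair := hpair ⟨0, by omega⟩ ⟨m - 1, by omega⟩
  have hxy_pair := hpair ⟨0, by omega⟩ ⟨2, by omega⟩
  rw [hf0, hfl] at hxl_pair
  rw [hf0, hf2] at hxy_pair
  rw [hadj, f.map_adj_iff, cycleGraph_adj_iff_val (by omega), ne_eq, hxl_pair, hxy_pair]
  simp only [dGraph, fromRel_adj, ne_eq, Fin.ext_iff]
  omega

end MoveEdge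

section Classification

variable {V : Type*} [Fintype V] [DecidableEq V] {G : SimpleGraph V} [DecidableRel G.Adj]
  {n : ℕ} {S : Finset V}

lemma pred_mul_pred_pred_nonneg (d : ℕ) : 0 ≤ ((d : ℤ) - 1) * (d - 2) := by
  rcases d with _ | _ | d
  · simp
  · simp
  · push_cast
    have : (0 : ℤ) ≤ d := Int.natCast_nonneg d
    nlinarith

lemma eq_one_or_two_of_pred_mul_eq_zero {d : ℕ} (h : ((d : ℤ) - 1) * (d - 2) = 0) :
    d = 1 ∨ d = 2 := by
  rcases mul_eq_zero.1 h with h | h <;> omega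

lemma neighborFinset_sdiff_eq_singleton {x y : V} (hx : x ∉ S) (hy : y ∉ S) (hxy : G.Adj x y)
    (hR : ∀ u ∉ S, ∀ v ∉ S, G.Adj u v → s(u, v) = s(x, y)) :
    G.neighborFinset x \ S = {y} := by
  ext z
  simp only [mem_sdiff, mem_neighborFinset, mem_singleton]
  refine ⟨fun hz => ?_, by rintro rfl; exact ⟨hxy, hy⟩⟩
  simpa [hxy.ne] using hR x hx z hz.2 hz.1

lemma degree_eq_of_sdiff_eq_singleton {x y : V} (h : G.neighborFinset x \ S = {y}) :
    G.degree x = #(G.neighborFinset x ∩ S) + 1 := by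
  rw [← card_neighborFinset_eq_degree, ← card_inter_add_card_sdiff _ S, h, card_singleton]

lemma degree_eq_card_inter_of_ne {x y r : V} (hr : r ∉ S) (hrx : r ≠ x) (hry : r ≠ y)
    (hR : ∀ u ∉ S, ∀ v ∉ S, G.Adj u v → s(u, v) = s(x, y)) :
    G.degree r = #(G.neighborFinset r ∩ S) := by
  rw [← card_neighborFinset_eq_degree, inter_eq_left.2]
  intro z hz
  by_contra hzS
  have := hR r hr z hzS ((mem_neighborFinset ..).1 hz)
  simp [hrx, hry] at this

lemma inter_neighborFinset_subset {x y : V} (h : G.neighborFinset x \ S = {y}) :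
    G.neighborFinset x ∩ G.neighborFinset y ⊆ G.neighborFinset x ∩ S := by
  intro z hz
  simp only [mem_inter] at hz ⊢
  refine ⟨hz.1, ?_⟩
  by_contra hzS
  have : z ∈ G.neighborFinset x \ S := mem_sdiff.2 ⟨hz.1, hzS⟩
  rw [h, mem_singleton] at this
  simp [this] at hz

/-- The exceptional graph `K₂ ∪ (K₄ - e)` on six vertices is the only one in which the edge outside
`S` lies in two triangles. -/
lemma eq_three_of_unique_edge (hcard : Fintype.card V = 2 * n)
    (htri : ∑ v, ((G.degree v : ℤ) - 1) * (G.degree v - 2) = 2 * #(G.cliqueFinset 3))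
    (hSn : #S = n) (hS : ∀ u ∈ S, ∀ v ∈ S, ¬ G.Adj u v)
    (htwo : ∀ T U : Finset V, #T = n → #U = n → (∀ u ∈ T, ∀ v ∈ T, ¬ G.Adj u v) →
      (∀ u ∈ U, ∀ v ∈ U, ¬ G.Adj u v) → S ≠ T → S ≠ U → T = U)
    {x y r₀ : V} (hx : x ∉ S) (hy : y ∉ S) (hxy : G.Adj x y)
    (hR : ∀ u ∉ S, ∀ v ∉ S, G.Adj u v → s(u, v) = s(x, y)) (hr₀ : r₀ ∉ S)
    (hr₀1 : #(G.neighborFinset r₀ ∩ S) = 1)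
    (hσ : ∀ r ∉ S, r ≠ r₀ → #(G.neighborFinset r ∩ S) = 2) (hxr : x ≠ r₀) (hyr : y ≠ r₀) :
    n = 3 := by
  have hR' : ∀ u ∉ S, ∀ v ∉ S, G.Adj u v → s(u, v) = s(y, x) := fun u hu v hv huv =>
    (hR u hu v hv huv).trans Sym2.eq_swap
  have hNx := neighborFinset_sdiff_eq_singleton hx hy hxy hR
  have hNy := neighborFinset_sdiff_eq_singleton hy hx hxy.symm hR'
  have hdx := degree_eq_of_sdiff_eq_singleton hNx
  have hdy := degree_eq_of_sdiff_eq_singleton hNy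
  rw [hσ x hx hxr] at hdx
  rw [hσ y hy hyr] at hdy
  set C := G.neighborFinset x ∩ G.neighborFinset y with hC
  have hCS : C ⊆ G.neighborFinset x ∩ S := inter_neighborFinset_subset hNx
  have hCle := card_le_card hCS
  rw [hσ x hx hxr] at hCle
  rw [card_cliqueFinset_three_of_unique_edge hS hxy hR, ← hC,
    ← add_sum_erase univ _ (mem_univ x),
    ← add_sum_erase (univ.erase x) _ (mem_erase.2 ⟨hxy.ne', mem_univ y⟩), hdx, hdy] at htri
  have hrest_nonneg : 0 ≤ ∑ v ∈ (univ.erase x).erase y,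
      ((G.degree v : ℤ) - 1) * (G.degree v - 2) :=
    sum_nonneg fun v _ => pred_mul_pred_pred_nonneg _
  push_cast at htri
  have hrest : ∑ v ∈ (univ.erase x).erase y, ((G.degree v : ℤ) - 1) * (G.degree v - 2) = 0 := by
    omega
  have hC2 : #C = 2 := by omega
  rw [sum_eq_zero_iff_of_nonneg fun v _ => pred_mul_pred_pred_nonneg _] at hrest
  have hsub : ∀ s ∈ C, s ∈ S := fun s hs => (mem_inter.1 (hCS hs)).2
  have hNC : ∀ s ∈ C, G.neighborFinset s = {x, y} := by
    intro s hs
    have hsx : s ≠ x := fun h => hx (h ▸ hsub s hs)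
    have hsy : s ≠ y := fun h => hy (h ▸ hsub s hs)
    have hds := eq_one_or_two_of_pred_mul_eq_zero (hrest s (by simp [hsx, hsy]))
    simp only [hC, mem_inter, mem_neighborFinset] at hs
    symm
    refine eq_of_subset_of_card_le ?_ ?_
    · simp [insert_subset_iff, hs.1.symm, hs.2.symm]
    · rw [card_neighborFinset_eq_degree, card_pair hxy.ne]
      omega
  obtain ⟨s₀, hs₀⟩ := card_eq_one.1 hr₀1
  have hpair : ({x, y} : Finset V) ⊆ Sᶜ := by simp [insert_subset_iff, hx, hy]
  have hScn : #Sᶜ = n := by rw [card_compl]; omega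
  have hcardR : #(Sᶜ \ {x, y}) = n - 2 := by
    rw [card_sdiff_of_subset hpair, card_pair hxy.ne, hScn]
  have hn2 : 2 ≤ n := by
    have := card_le_card hpair
    rwa [card_pair hxy.ne, hScn] at this
  have hr₀U : r₀ ∈ C ∪ Sᶜ \ {x, y} := by simp [hr₀, hxr.symm, hyr.symm]
  have heq := htwo (insert r₀ (S.erase s₀)) (C ∪ Sᶜ \ {x, y})
    ((card_insert_erase_of_neighborFinset_inter hr₀ hs₀).trans hSn) ?_
    (indep_insert_erase hS hs₀) ?_ (fun h => hr₀ (h ▸ mem_insert_self _ _))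
    (fun h => hr₀ (h ▸ hr₀U))
  · have hsing : Sᶜ \ {x, y} = {r₀} := by
      refine eq_singleton_iff_unique_mem.2 ⟨by simp [hr₀, hxr.symm, hyr.symm], fun v hv => ?_⟩
      have hvU : v ∈ insert r₀ (S.erase s₀) := heq ▸ mem_union_right _ hv
      rw [mem_sdiff, mem_compl] at hv
      exact (mem_insert.1 hvU).resolve_right fun h => hv.1 (mem_of_mem_erase h)
    rw [hsing, card_singleton] at hcardR
    omega
  · rw [card_union_of_disjoint, hC2, hcardR]
    · omega
    · rw [Finset.disjoint_left]
      intro v hv hv'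
      rw [mem_sdiff, mem_compl] at hv'
      exact hv'.1 (hsub v hv)
  · have hmix : ∀ u ∈ C, ∀ v ∈ Sᶜ \ {x, y}, ¬ G.Adj u v := fun u hu v hv huv => by
      rw [← mem_neighborFinset, hNC u hu] at huv
      exact (mem_sdiff.1 hv).2 huv
    intro u hu v hv huv
    rw [mem_union] at hu hv
    rcases hu with hu | hu <;> rcases hv with hv | hv
    · exact hS u (hsub u hu) v (hsub v hv) huv
    · exact hmix u hu v hv huv
    · exact hmix v hv u hu huv.symm
    · simp only [mem_sdiff, mem_compl, mem_insert, mem_singleton, not_or] at hu hv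
      have := hR u hu.1 v hv.1 huv
      simp [hu.2.1, hu.2.2] at this

/-- If one end of the edge outside `S` has a single neighbour in `S`, the graph is `dGraph (2 * n)`. -/
lemma nonempty_iso_dGraph_of_unique_edge (hn : 2 ≤ n) (hcard : Fintype.card V = 2 * n)
    (hdeg : ∑ v, (G.degree v : ℤ) = 4 * n)
    (htri : ∑ v, ((G.degree v : ℤ) - 1) * (G.degree v - 2) = 2 * #(G.cliqueFinset 3))
    (hSn : #S = n) (hS : ∀ u ∈ S, ∀ v ∈ S, ¬ G.Adj u v)
    (htwo : ∀ T U : Finset V, #T = n → #U = n → (∀ u ∈ T, ∀ v ∈ T, ¬ G.Adj u v) →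
      (∀ u ∈ U, ∀ v ∈ U, ¬ G.Adj u v) → S ≠ T → S ≠ U → T = U)
    {x y : V} (hx : x ∉ S) (hy : y ∉ S) (hxy : G.Adj x y)
    (hR : ∀ u ∉ S, ∀ v ∉ S, G.Adj u v → s(u, v) = s(x, y))
    (hx1 : #(G.neighborFinset x ∩ S) = 1)
    (hσ : ∀ r ∉ S, r ≠ x → #(G.neighborFinset r ∩ S) = 2) :
    Nonempty (G ≃g dGraph (2 * n)) := by
  have hNx := neighborFinset_sdiff_eq_singleton hx hy hxy hR
  have hNy := neighborFinset_sdiff_eq_singleton hy hx hxy.symm fun u hu v hv huv =>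
    (hR u hu v hv huv).trans Sym2.eq_swap
  have hdx := degree_eq_of_sdiff_eq_singleton hNx
  have hdy := degree_eq_of_sdiff_eq_singleton hNy
  rw [hx1] at hdx
  rw [hσ y hy hxy.ne'] at hdy
  set C := G.neighborFinset x ∩ G.neighborFinset y with hC
  have hCS : C ⊆ G.neighborFinset x ∩ S := inter_neighborFinset_subset hNx
  have hCle := card_le_card hCS
  rw [hx1] at hCle
  rw [card_cliqueFinset_three_of_unique_edge hS hxy hR, ← hC,
    ← add_sum_erase univ _ (mem_univ y), hdy] at htri
  have hrest_nonneg : 0 ≤ ∑ v ∈ univ.erase y, ((G.degree v : ℤ) - 1) * (G.degree v - 2) :=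
    sum_nonneg fun v _ => pred_mul_pred_pred_nonneg _
  push_cast at htri
  have hrest : ∑ v ∈ univ.erase y, ((G.degree v : ℤ) - 1) * (G.degree v - 2) = 0 := by
    omega
  have hC1 : #C = 1 := by omega
  rw [sum_eq_zero_iff_of_nonneg fun v _ => pred_mul_pred_pred_nonneg _] at hrest
  have hd : ∀ v, v ≠ y → G.degree v = 1 ∨ G.degree v = 2 := fun v hv =>
    eq_one_or_two_of_pred_mul_eq_zero (hrest v (by simp [hv]))
  obtain ⟨s, hs⟩ := card_eq_one.1 hx1
  have hCs : C = {s} := by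
    rw [← hs]
    exact eq_of_subset_of_card_le hCS (by omega)
  have hsS : s ∈ S := (mem_inter.1 (hs ▸ mem_singleton_self s)).2
  have hsC : s ∈ C := hCs ▸ mem_singleton_self s
  simp only [hC, mem_inter, mem_neighborFinset] at hsC
  obtain ⟨hxs, hys⟩ := hsC
  have hsy : s ≠ y := hys.ne'
  have hds : G.degree s = 2 := by
    refine (hd s hsy).resolve_left fun h => ?_
    rw [← card_neighborFinset_eq_degree, card_eq_one] at h
    obtain ⟨z, hz⟩ := h
    have hxz : x ∈ G.neighborFinset s := by simpa using hxs.symm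
    have hyz : y ∈ G.neighborFinset s := by simpa using hys.symm
    rw [hz, mem_singleton] at hxz hyz
    exact hxy.ne (hxz.trans hyz.symm)
  have hNxeq : G.neighborFinset x = {s, y} := by
    rw [← sdiff_union_inter (G.neighborFinset x) S, hNx, hs, union_comm]
    rfl
  -- the unique leaf
  have hdef : ∑ v ∈ univ.erase y, (2 - (G.degree v : ℤ)) = 1 := by
    have h1 : ∑ v, (2 - (G.degree v : ℤ)) = 0 := by
      rw [sum_sub_distrib, hdeg, sum_const, card_univ, hcard, nsmul_eq_mul]
      push_cast
      ring
    rw [← add_sum_erase univ _ (mem_univ y), hdy] at h1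
    push_cast at h1
    linarith
  obtain ⟨l, hl, hl0⟩ := exists_ne_zero_of_sum_ne_zero (hdef.trans_ne one_ne_zero)
  have hly : l ≠ y := (mem_erase.1 hl).1
  have hdl : G.degree l = 1 := by
    rcases hd l hly with h | h
    · exact h
    · simp [h] at hl0
  have hd2 : ∀ v, v ≠ y → v ≠ l → G.degree v = 2 := by
    intro v hvy hvl
    rw [← add_sum_erase _ _ hl, hdl] at hdef
    have h0 : ∑ v ∈ (univ.erase y).erase l, (2 - (G.degree v : ℤ)) = 0 := by
      push_cast at hdef
      linarith
    rw [sum_eq_zero_iff_of_nonneg] at h0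
    · have := h0 v (by simp [hvy, hvl])
      omega
    · intro w hw
      have := hd w (mem_erase.1 (mem_erase.1 hw).2).1
      omega
  have hlx : l ≠ x := fun h => by rw [h, hdx] at hdl; omega
  have hls : l ≠ s := fun h => by rw [h, hds] at hdl; omega
  have hlS : l ∈ S := by
    by_contra hlS
    have := degree_eq_card_inter_of_ne hlS hlx hly hR
    rw [hσ l hlS hlx, hdl] at this
    omega
  have hnxl : ¬ G.Adj x l := fun h => by
    rw [← mem_neighborFinset, hNxeq] at h
    simp [hls, hly] at h
  have hxsne : x ≠ s := hxs.ne
  let H := moveEdge G x y l hlx.symm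
  have hHadj : ∀ u v, H.Adj u v ↔ (G.Adj u v ∧ s(u, v) ≠ s(x, y)) ∨ s(u, v) = s(x, l) :=
    fun u v => Iff.rfl
  let : DecidableRel H.Adj := Classical.decRel _
  have hreg : ∀ v, H.degree v = 2 := by
    intro v
    rw [← card_neighborFinset_eq_degree]
    by_cases hvx : v = x
    · subst hvx
      have : H.neighborFinset v = {s, l} := by
        ext w
        rw [mem_neighborFinset, hHadj, ← mem_neighborFinset, hNxeq]
        simp only [mem_insert, mem_singleton, ne_eq, Sym2.eq_iff]
        grind
      rw [this, card_pair hls.symm]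
    by_cases hvy : v = y
    · subst hvy
      have : H.neighborFinset v = (G.neighborFinset v).erase x := by
        ext w
        rw [mem_neighborFinset, hHadj, mem_erase, mem_neighborFinset]
        simp only [ne_eq, Sym2.eq_iff]
        grind
      rw [this, card_erase_of_mem (by simpa using hxy.symm), card_neighborFinset_eq_degree, hdy]
    by_cases hvl : v = l
    · subst hvl
      have : H.neighborFinset v = insert x (G.neighborFinset v) := by
        ext w
        rw [mem_neighborFinset, hHadj, mem_insert, mem_neighborFinset]
        simp only [ne_eq, Sym2.eq_iff]
        grind
      rw [this, card_insert_of_notMem (by simpa [G.adj_comm] using hnxl),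
        card_neighborFinset_eq_degree, hdl]
    · have : H.neighborFinset v = G.neighborFinset v := by
        ext w
        rw [mem_neighborFinset, hHadj, mem_neighborFinset]
        simp only [ne_eq, Sym2.eq_iff]
        grind
      rw [this, card_neighborFinset_eq_degree, hd2 v hvy hvl]
  have hHS : ∀ u ∈ S, ∀ v ∈ S, ¬ H.Adj u v := by
    intro u hu v hv huv
    rcases (hHadj u v).1 huv with h | h
    · exact hS u hu v hv h.1
    · simp only [Sym2.eq_iff] at h
      grind
  have hHS' : ∀ u ∉ S, ∀ v ∉ S, ¬ H.Adj u v := by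
    intro u hu v hv huv
    rcases (hHadj u v).1 huv with h | h
    · exact h.2 (hR u hu v hv h.1)
    · simp only [Sym2.eq_iff] at h
      grind
  have hconn : H.Connected := by
    refine connected_of_forall_indep_eq two_ne_zero hreg hHS hHS' x fun U hU hUi hxU => ?_
    have hxU' : x ∉ U := fun h => hx (hxU.1 h)
    by_contra hne
    have heq := htwo (insert x (S.erase s)) U
      ((card_insert_erase_of_neighborFinset_inter hx hs).trans hSn) (hU.trans hSn)
      (indep_insert_erase hS hs) ?_ (fun h => hx (h ▸ mem_insert_self _ _)) (Ne.symm hne)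
    · exact hxU' (heq ▸ mem_insert_self _ _)
    · intro u hu v hv huv
      refine hUi u hu v hv ((hHadj u v).2 (Or.inl ⟨huv, fun h => ?_⟩))
      simp only [Sym2.eq_iff] at h
      grind
  have hHxs : H.Adj x s := (hHadj x s).2 (Or.inl ⟨hxs, by simp [hsy, hxy.ne]⟩)
  have hHsy : H.Adj s y :=
    (hHadj s y).2 (Or.inl ⟨hys.symm, by simp [hsy, hxsne.symm]⟩)
  obtain ⟨f, _, hf0, hf1⟩ := exists_iso_cycleGraph hconn hreg hHxs hcard
  exact nonempty_iso_dGraph hlx.symm hxy hnxl hHsy hls (by omega) f hf0 hf1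

/-- If the complement of `S` is independent, the graph is a cycle. -/
lemma nonempty_iso_cycleGraph_of_bipartite (hn : 2 ≤ n) (hcard : Fintype.card V = 2 * n)
    (hdeg : ∑ v, (G.degree v : ℤ) = 4 * n)
    (htri : ∑ v, ((G.degree v : ℤ) - 1) * (G.degree v - 2) = 2 * #(G.cliqueFinset 3))
    (hSn : #S = n) (hS : ∀ u ∈ S, ∀ v ∈ S, ¬ G.Adj u v)
    (htwo : ∀ T U : Finset V, #T = n → #U = n → (∀ u ∈ T, ∀ v ∈ T, ¬ G.Adj u v) →
      (∀ u ∈ U, ∀ v ∈ U, ¬ G.Adj u v) → S ≠ T → S ≠ U → T = U)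
    (hS' : ∀ u ∉ S, ∀ v ∉ S, ¬ G.Adj u v) :
    Nonempty (G ≃g cycleGraph (2 * n)) := by
  rw [cliqueFinset_three_of_bipartite hS hS', card_empty, Nat.cast_zero, mul_zero,
    sum_eq_zero_iff_of_nonneg fun v _ => pred_mul_pred_pred_nonneg _] at htri
  have hle : ∀ v ∈ univ, (G.degree v : ℤ) ≤ 2 := fun v hv => by
    have := eq_one_or_two_of_pred_mul_eq_zero (htri v hv)
    omega
  have hreg : ∀ v, G.degree v = 2 := fun v => by
    have := (sum_eq_sum_iff_of_le hle).1 (by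
      rw [hdeg, sum_const, card_univ, hcard, nsmul_eq_mul]; push_cast; ring) v (mem_univ v)
    exact_mod_cast this
  obtain ⟨x, hx⟩ : S.Nonempty := card_pos.1 (by omega)
  have hconn : G.Connected := by
    refine connected_of_forall_indep_eq two_ne_zero hreg hS hS' x fun U hU hUi hxU => ?_
    by_contra hne
    have heq := htwo Sᶜ U (by rw [card_compl]; omega) (hU.trans hSn)
      (fun u hu v hv => hS' u (mem_compl.1 hu) v (mem_compl.1 hv)) hUi
      (fun h => mem_compl.1 (h ▸ hx : x ∈ Sᶜ) hx) (Ne.symm hne)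
    have : x ∈ Sᶜ := heq ▸ hxU.2 hx
    exact mem_compl.1 this hx
  obtain ⟨z, hz⟩ : (G.neighborFinset x).Nonempty :=
    card_pos.1 (by rw [card_neighborFinset_eq_degree, hreg]; omega)
  obtain ⟨f, -⟩ := exists_iso_cycleGraph hconn hreg ((mem_neighborFinset ..).1 hz) hcard
  exact ⟨f.symm⟩

end Classification

theorem indepEquiv_evenCycle {V : Type*} [Fintype V] (G : SimpleGraph V) (n : ℕ)
    (hn : 2 ≤ n) (hn3 : n ≠ 3)
    (h : ∀ k, indepCount G k = indepCount (SimpleGraph.cycleGraph (2 * n)) k) :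
    Nonempty (G ≃g SimpleGraph.cycleGraph (2 * n)) ∨ Nonempty (G ≃g dGraph (2 * n)) := by
  classical
  obtain ⟨S, hSn, hS⟩ := exists_indep_card_eq hn h
  have hcard := card_eq_of_indepEquiv h
  have hdeg := sum_degree_of_indepEquiv hn h
  have htri := sum_degree_mul_of_indepEquiv hn h
  have htwo : ∀ T U : Finset V, #T = n → #U = n → (∀ u ∈ T, ∀ v ∈ T, ¬ G.Adj u v) →
      (∀ u ∈ U, ∀ v ∈ U, ¬ G.Adj u v) → S ≠ T → S ≠ U → T = U := fun T U hT hU hTi hUi =>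
    eq_of_three_max_indep hn h S T U ⟨hSn, hS⟩ ⟨hT, hTi⟩ ⟨hU, hUi⟩
  rcases compl_indep_or_exists_unique_edge hcard (by exact_mod_cast hdeg) hSn hS
    (card_le_of_indep hn h) htwo with hS' | ⟨x, y, r₀, hx, hy, hxy, hR, hr₀, hr₀1, hσ⟩
  · exact Or.inl (nonempty_iso_cycleGraph_of_bipartite hn hcard hdeg htri hSn hS htwo hS')
  right
  by_cases hxr : x = r₀
  · subst hxr
    exact nonempty_iso_dGraph_of_unique_edge hn hcard hdeg htri hSn hS htwo hx hy hxy hR hr₀1 hσ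
  by_cases hyr : y = r₀
  · subst hyr
    exact nonempty_iso_dGraph_of_unique_edge hn hcard hdeg htri hSn hS htwo hy hx hxy.symm
      (fun u hu v hv huv => (hR u hu v hv huv).trans Sym2.eq_swap) hr₀1 hσ
  · exact absurd (eq_three_of_unique_edge hcard htri hSn hS htwo hx hy hxy hR hr₀ hr₀1 hσ hxr hyr)
      hn3
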